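/- Let ℙ_n denote the distribution of the observed labeled graph (G, L) under the labeled stochastic block model 𝒢(n, a/n, b/n, μ, ν), and let ℙ'_n denote the distribution of the labeled Erdős–Rényi graph 𝒢(n, (a+b)/2). Define the likelihood ratio Y_n(G, L) = ℙ_n(G, L)/ℙ'_n(G, L) = 2^{−n}·Σ_{σ∈{±1}^n} ∏_{u<v} W_{uv}(G, L, σ), where W_{uv}(G, L, σ) equals 2a·μ(ℓ)/(a·μ(ℓ)+b·ν(ℓ)) if σ_u = σ_v, (u,v) ∈ E(G), L_{uv} = ℓ; equals 2b·ν(ℓ)/(a·μ(ℓ)+b·ν(ℓ)) if σ_u ≠ σ_v, (u,v) ∈ E(G), L_{uv} = ℓ; equals (1−a/n)/(1−(a+b)/(2n)) if σ_u = σ_v, (u,v) ∉ E(G); and equals (1−b/n)/(1−(a+b)/(2n)) if σ_u ≠ σ_v, (u,v) ∉ E(G). If τ < 1, then E_{ℙ'_n}[Y_n²] → exp(−τ/2 − τ²/4)/√(1 − τ) as n → ∞. -/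

import Mathlib

open Finset Filter Real

namespace LSBM

/-- Ordered pairs `u < v` of vertices. -/
abbrev Pairs (n : ℕ) := {p : Fin n × Fin n // p.1 < p.2}

/-- A labeled-graph configuration: each pair `u < v` carries `none` (no edge)
or `some ℓ` (an edge with label `ℓ`). -/
abbrev EdgeConf (n : ℕ) (L : Type*) := Pairs n → Option L

variable {L : Type*}

/-- The label (if any) on the edge between `u` and `v`. -/
def getLabel {n : ℕ} (E : EdgeConf n L) (u v : Fin n) : Option L :=
  if h : u < v then E ⟨(u, v), h⟩ else if h' : v < u then E ⟨(v, u), h'⟩ else none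

/-- Per-pair mass under the labeled stochastic block model. -/
noncomputable def sbmPairMass (n : ℕ) (a b : ℝ) (μ ν : L → ℝ) (same : Bool) : Option L → ℝ
  | none => if same then 1 - a / n else 1 - b / n
  | some ℓ => if same then (a / n) * μ ℓ else (b / n) * ν ℓ

/-- Joint mass of a (type assignment, labeled graph) outcome under the labeled SBM. -/
noncomputable def sbmMass (n : ℕ) (a b : ℝ) (μ ν : L → ℝ)
    (x : (Fin n → Bool) × EdgeConf n L) : ℝ :=
  (1 / 2 : ℝ) ^ n *
    ∏ p : Pairs n, sbmPairMass n a b μ ν (x.1 p.1.1 == x.1 p.1.2) (x.2 p)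

/-- Probability of an event under the labeled SBM (joint in types and graph). -/
noncomputable def sbmProb [Fintype L] (n : ℕ) (a b : ℝ) (μ ν : L → ℝ)
    (A : Set ((Fin n → Bool) × EdgeConf n L)) : ℝ :=
  ∑ x : (Fin n → Bool) × EdgeConf n L, A.indicator (sbmMass n a b μ ν) x

/-- Probability of a labeled-graph event under the labeled SBM (marginal over types). -/
noncomputable def sbmGraphProb [Fintype L] (n : ℕ) (a b : ℝ) (μ ν : L → ℝ)
    (A : Set (EdgeConf n L)) : ℝ :=
  sbmProb n a b μ ν {x | x.2 ∈ A}

/-- Conditional (given the type assignment `σ`) probability of a labeled-graph event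
under the labeled SBM. -/
noncomputable def sbmCondProb [Fintype L] (n : ℕ) (a b : ℝ) (μ ν : L → ℝ)
    (σ : Fin n → Bool) (A : Set (EdgeConf n L)) : ℝ :=
  ∑ E : EdgeConf n L, A.indicator
    (fun E' => ∏ p : Pairs n, sbmPairMass n a b μ ν (σ p.1.1 == σ p.1.2) (E' p)) E

/-- Conditional (given `σ`) expectation of a function of the labeled graph. -/
noncomputable def sbmCondExp [Fintype L] (n : ℕ) (a b : ℝ) (μ ν : L → ℝ)
    (σ : Fin n → Bool) (f : EdgeConf n L → ℝ) : ℝ :=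
  ∑ E : EdgeConf n L,
    (∏ p : Pairs n, sbmPairMass n a b μ ν (σ p.1.1 == σ p.1.2) (E p)) * f E

/-- Per-pair mass under the labeled Erdős–Rényi model. -/
noncomputable def erPairMass (n : ℕ) (a b : ℝ) (μ ν : L → ℝ) : Option L → ℝ
  | none => 1 - (a + b) / (2 * n)
  | some ℓ => ((a + b) / (2 * n)) * ((a * μ ℓ + b * ν ℓ) / (a + b))

/-- Mass of a labeled graph under the labeled Erdős–Rényi model. -/
noncomputable def erMass [Fintype L] (n : ℕ) (a b : ℝ) (μ ν : L → ℝ) (E : EdgeConf n L) : ℝ :=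
  ∏ p : Pairs n, erPairMass n a b μ ν (E p)

/-- Probability of a labeled-graph event under the labeled Erdős–Rényi model. -/
noncomputable def erProb [Fintype L] (n : ℕ) (a b : ℝ) (μ ν : L → ℝ)
    (A : Set (EdgeConf n L)) : ℝ :=
  ∑ E : EdgeConf n L, A.indicator (erMass n a b μ ν) E

/-- Expectation of a function of the labeled graph under the labeled Erdős–Rényi model. -/
noncomputable def erExp [Fintype L] (n : ℕ) (a b : ℝ) (μ ν : L → ℝ)
    (f : EdgeConf n L → ℝ) : ℝ :=
  ∑ E : EdgeConf n L, erMass n a b μ ν E * f E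

/-- `μ` is a probability distribution on the (finite) label set. -/
def IsProbVec [Fintype L] (μ : L → ℝ) : Prop := (∀ ℓ, 0 ≤ μ ℓ) ∧ ∑ ℓ, μ ℓ = 1

/-- The reconstruction-threshold parameter `τ`. -/
noncomputable def tau [Fintype L] (a b : ℝ) (μ ν : L → ℝ) : ℝ :=
  ∑ ℓ, (a * μ ℓ - b * ν ℓ) ^ 2 / (2 * (a * μ ℓ + b * ν ℓ))

/-- The weighted adjacency matrix `W` with `W u v = A u v * w (L u v)`. -/
def Wmat {n : ℕ} (w : L → ℝ) (E : EdgeConf n L) : Matrix (Fin n) (Fin n) ℝ :=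
  fun u v => match getLabel E u v with
    | none => 0
    | some ℓ => w ℓ

/-- The ±1 vector associated with a Boolean type assignment (`true ↦ +1`). -/
def signVec {n : ℕ} (σ : Fin n → Bool) : Fin n → ℝ := fun u => if σ u then 1 else -1

/-- `x` is a vector with entries in `{±1}`. -/
def IsSignVec {n : ℕ} (x : Fin n → ℝ) : Prop := ∀ u, x u = 1 ∨ x u = -1

/-- Componentwise sign of a real vector. -/
noncomputable def signR {n : ℕ} (x : Fin n → ℝ) : Fin n → ℝ :=
  fun u => if 0 ≤ x u then 1 else -1

open Classical in
/-- Hamming distance between two vectors. -/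
noncomputable def hamming {n : ℕ} (x y : Fin n → ℝ) : ℕ :=
  (univ.filter fun u => x u ≠ y u).card

/-- The overlap `Q(x, y) = 1/2 - (1/n) min(d(x,y), d(x,-y))`. -/
noncomputable def overlap (n : ℕ) (x y : Fin n → ℝ) : ℝ :=
  1 / 2 - (1 / n) * min (hamming x y : ℝ) (hamming x (-y) : ℝ)

open Classical in
/-- The weight of the cut induced by a ±1 assignment `σ`:
`∑_{(u,v) : u < v, σ_u ≠ σ_v} W_{uv}`. -/
noncomputable def cutWeight {n : ℕ} (w : L → ℝ) (E : EdgeConf n L) (σ : Fin n → ℝ) : ℝ :=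
  ∑ p : Pairs n, if σ p.1.1 ≠ σ p.1.2 then Wmat w E p.1.1 p.1.2 else 0

/-- The quadratic form `xᵀ M x`. -/
def quadForm {n : ℕ} (M : Matrix (Fin n) (Fin n) ℝ) (x : Fin n → ℝ) : ℝ :=
  ∑ u, ∑ v, x u * M u v * x v

/-- The entrywise inner product `⟨A, B⟩ = ∑_{u,v} A u v * B u v`. -/
def mInner {n : ℕ} (A B : Matrix (Fin n) (Fin n) ℝ) : ℝ :=
  ∑ u, ∑ v, A u v * B u v

/-- The degree of a vertex. -/
def degree {n : ℕ} (E : EdgeConf n L) (u : Fin n) : ℕ :=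
  (univ.filter fun v => (getLabel E u v).isSome).card

open Classical in
/-- The weighted adjacency matrix of the graph obtained by removing all edges incident
to vertices of degree larger than `(3/2)·(a+b)/2`. -/
noncomputable def prunedW {n : ℕ} (a b : ℝ) (w : L → ℝ) (E : EdgeConf n L) :
    Matrix (Fin n) (Fin n) ℝ :=
  fun u v =>
    if (degree E u : ℝ) ≤ (3 / 2) * ((a + b) / 2) ∧
       (degree E v : ℝ) ≤ (3 / 2) * ((a + b) / 2)
    then Wmat w E u v else 0

/-- The conditional (given `σ`) entrywise expectation `E[W | σ]` of the weighted
adjacency matrix. -/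
noncomputable def condEW {n : ℕ} [Fintype L] (a b : ℝ) (μ ν w : L → ℝ)
    (σ : Fin n → Bool) : Matrix (Fin n) (Fin n) ℝ :=
  fun u v =>
    if u = v then 0
    else if σ u = σ v then (a / n) * ∑ ℓ, μ ℓ * w ℓ
    else (b / n) * ∑ ℓ, ν ℓ * w ℓ

/-- The matrix `D' = W' - (α/n) J` used in the spectral method, where
`α = (1/2)·∑_ℓ w(ℓ)(aμ(ℓ)+bν(ℓ))` and `J` is the all-one matrix. -/
noncomputable def Dmat {n : ℕ} [Fintype L] (a b : ℝ) (μ ν w : L → ℝ)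
    (E : EdgeConf n L) : Matrix (Fin n) (Fin n) ℝ :=
  fun u v => prunedW a b w E u v - ((1 / 2) * ∑ ℓ, w ℓ * (a * μ ℓ + b * ν ℓ)) / n

/-- The spectral norm (ℓ²-operator norm) of a real square matrix. -/
noncomputable def specNorm {n : ℕ} (M : Matrix (Fin n) (Fin n) ℝ) : ℝ :=
  ‖Matrix.toEuclideanCLM (𝕜 := ℝ) M‖

/-- The number of `k`-cycles carrying the label sequence `ℓ`, in the canonical
orientation: starting from the minimal-index vertex of the cycle toward its
neighbor of smaller index. -/
def cycleCount [DecidableEq L] (n k : ℕ) (E : EdgeConf n L) (ℓ : Fin k → L) : ℕ :=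
  if hk : 0 < k then
    haveI : NeZero k := ⟨hk.ne'⟩
    (univ.filter fun c : Fin k → Fin n =>
      Function.Injective c ∧ (∀ i, c 0 ≤ c i) ∧
      c 1 < c ⟨k - 1, Nat.sub_lt hk one_pos⟩ ∧
      ∀ i : Fin k, getLabel E (c i) (c (i + 1)) = some (ℓ i)).card
  else 0

/-- The Poisson probability mass function. -/
noncomputable def poissonPMF (m : ℝ) (j : ℕ) : ℝ :=
  Real.exp (-m) * m ^ j / (Nat.factorial j)

/-- The mean cycle count `λ([ℓ]_k)` under the labeled Erdős–Rényi model. -/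
noncomputable def lamER [Fintype L] (a b : ℝ) (μ ν : L → ℝ) {k : ℕ} (ℓ : Fin k → L) : ℝ :=
  (1 / ((2 : ℝ) ^ (k + 1) * k)) * ∏ i, (a * μ (ℓ i) + b * ν (ℓ i))

/-- The mean cycle count `ξ([ℓ]_k)` under the labeled SBM. -/
noncomputable def xiSBM [Fintype L] (a b : ℝ) (μ ν : L → ℝ) {k : ℕ} (ℓ : Fin k → L) : ℝ :=
  (1 / ((2 : ℝ) ^ (k + 1) * k)) *
    (∏ i, (a * μ (ℓ i) + b * ν (ℓ i)) + ∏ i, (a * μ (ℓ i) - b * ν (ℓ i)))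

/-- The per-pair likelihood-ratio factor `W_{uv}(G, L, σ)` (SBM versus labeled
Erdős–Rényi), as a function of the pair status (`same` type or not) and the
edge/label information on the pair. -/
noncomputable def likPair (n : ℕ) (a b : ℝ) (μ ν : L → ℝ) (same : Bool) :
    Option L → ℝ
  | some ℓ =>
      if same then 2 * a * μ ℓ / (a * μ ℓ + b * ν ℓ)
      else 2 * b * ν ℓ / (a * μ ℓ + b * ν ℓ)
  | none =>
      if same then (1 - a / n) / (1 - (a + b) / (2 * n))
      else (1 - b / n) / (1 - (a + b) / (2 * n))

/-- The likelihood ratio `Y_n = ℙ_n / ℙ'_n` of the labeled SBM with respect to the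
labeled Erdős–Rényi model. -/
noncomputable def Ylik [Fintype L] (n : ℕ) (a b : ℝ) (μ ν : L → ℝ)
    (E : EdgeConf n L) : ℝ :=
  (1 / 2 : ℝ) ^ n * ∑ σ : Fin n → Bool,
    ∏ p : Pairs n, likPair n a b μ ν (σ p.1.1 == σ p.1.2) (E p)


/-- Sign of a Boolean. -/
noncomputable def sg (s : Bool) : ℝ := if s then 1 else -1

lemma sg_beq (s t : Bool) : sg (s == t) = sg s * sg t := by
  cases s <;> cases t <;> simp [sg]

lemma sg_sq (s : Bool) : sg s * sg s = 1 := by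
  cases s <;> simp [sg]

/-- Second moment of the per-pair fluctuation. -/
noncomputable def gam [Fintype L] (n : ℕ) (a b : ℝ) (μ ν : L → ℝ) : ℝ :=
  tau a b μ ν / n + ((a - b) / (2 * n)) ^ 2 / (1 - (a + b) / (2 * n))

lemma label_term (n : ℕ) (hn : (n : ℝ) ≠ 0) (a b m k : ℝ) (ha : 0 < a) (hb : 0 < b)
    (hm : 0 ≤ m) (hk : 0 ≤ k) (s t : Bool) :
    ((a + b) / (2 * n)) * ((a * m + b * k) / (a + b)) *
      ((if s then 2 * a * m / (a * m + b * k) else 2 * b * k / (a * m + b * k)) *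
       (if t then 2 * a * m / (a * m + b * k) else 2 * b * k / (a * m + b * k))) =
    (a * m + b * k) / (2 * n) + (sg s + sg t) * ((a * m - b * k) / (2 * n)) +
      sg s * sg t * ((a * m - b * k) ^ 2 / (2 * (a * m + b * k)) / n) := by
  have h1 : 0 ≤ a * m := by positivity
  have h2 : 0 ≤ b * k := by positivity
  have hab : a + b ≠ 0 := by positivity
  by_cases h : a * m + b * k = 0
  · have e1 : a * m = 0 := by linarith
    have e2 : b * k = 0 := by linarith
    simp [e1, e2]
  · cases s <;> cases t <;> simp only [sg, if_true, if_false, Bool.false_eq_true] <;>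
      field_simp <;> ring

lemma pair_exp [Fintype L] (n : ℕ) (hn : (n : ℝ) ≠ 0) (a b : ℝ) (ha : 0 < a) (hb : 0 < b)
    (hp : 1 - (a + b) / (2 * n) ≠ 0)
    (μ ν : L → ℝ) (hμ : IsProbVec μ) (hν : IsProbVec ν) (s t : Bool) :
    ∑ o : Option L, erPairMass n a b μ ν o * (likPair n a b μ ν s o * likPair n a b μ ν t o) =
      1 + sg s * sg t * gam n a b μ ν := by
  rw [Fintype.sum_option]
  have hs : ∑ ℓ, erPairMass n a b μ ν (some ℓ) *
      (likPair n a b μ ν s (some ℓ) * likPair n a b μ ν t (some ℓ)) =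
      (a + b) / (2 * n) + (sg s + sg t) * ((a - b) / (2 * n)) +
        sg s * sg t * (tau a b μ ν / n) := by
    simp only [erPairMass, likPair]
    rw [Finset.sum_congr rfl (fun ℓ _ => label_term n hn a b (μ ℓ) (ν ℓ) ha hb (hμ.1 ℓ) (hν.1 ℓ) s t)]
    rw [Finset.sum_add_distrib, Finset.sum_add_distrib, ← Finset.mul_sum, ← Finset.mul_sum,
      ← Finset.sum_div, ← Finset.sum_div, ← Finset.sum_div, Finset.sum_add_distrib,
      Finset.sum_sub_distrib, ← Finset.mul_sum, ← Finset.mul_sum, hμ.2, hν.2]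
    simp [tau]
  rw [hs]
  have ea : 1 - a / n = (1 - (a + b) / (2 * n)) - (a - b) / (2 * n) := by field_simp; ring
  have eb : 1 - b / n = (1 - (a + b) / (2 * n)) + (a - b) / (2 * n) := by field_simp; ring
  simp only [erPairMass, likPair, gam, ea, eb]
  have eq : (a + b) / (2 * n) = 1 - (1 - (a + b) / (2 * n)) := by ring
  generalize 1 - (a + b) / (2 * n) = q at *
  rw [eq]
  generalize (a - b) / (2 * n) = d
  cases s <;> cases t <;> simp only [sg, if_true, if_false, Bool.false_eq_true] <;>
      field_simp <;> ring

lemma second_moment_eq [Fintype L] (n : ℕ) (hn : (n : ℝ) ≠ 0) (a b : ℝ) (ha : 0 < a) (hb : 0 < b)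
    (hp : 1 - (a + b) / (2 * n) ≠ 0)
    (μ ν : L → ℝ) (hμ : IsProbVec μ) (hν : IsProbVec ν) :
    erExp n a b μ ν (fun E => (Ylik n a b μ ν E) ^ 2) =
      (1 / 4 : ℝ) ^ n * ∑ σ : Fin n → Bool, ∑ ρ : Fin n → Bool,
        ∏ p : Pairs n, (1 + (sg (σ p.1.1) * sg (ρ p.1.1)) * (sg (σ p.1.2) * sg (ρ p.1.2))
          * gam n a b μ ν) := by
  have key : ∀ σ ρ : Fin n → Bool,
      ∏ p : Pairs n, (1 + (sg (σ p.1.1) * sg (ρ p.1.1)) * (sg (σ p.1.2) * sg (ρ p.1.2))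
          * gam n a b μ ν) =
      ∑ E : EdgeConf n L, erMass n a b μ ν E *
        ((∏ p : Pairs n, likPair n a b μ ν (σ p.1.1 == σ p.1.2) (E p)) *
         (∏ p : Pairs n, likPair n a b μ ν (ρ p.1.1 == ρ p.1.2) (E p))) := by
    intro σ ρ
    simp only [erMass, ← Finset.prod_mul_distrib]
    rw [← Fintype.prod_sum (fun (p : Pairs n) (o : Option L) => erPairMass n a b μ ν o *
      (likPair n a b μ ν (σ p.1.1 == σ p.1.2) o * likPair n a b μ ν (ρ p.1.1 == ρ p.1.2) o))]
    refine Finset.prod_congr rfl (fun p _ => ?_)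
    rw [pair_exp n hn a b ha hb hp μ ν hμ hν, sg_beq, sg_beq]
    ring
  simp only [key]
  simp only [erExp, Ylik]
  have h4 : (1 / 4 : ℝ) ^ n = (1 / 2) ^ n * (1 / 2) ^ n := by
    rw [← mul_pow]; norm_num
  have : ∀ E : EdgeConf n L, erMass n a b μ ν E * ((1 / 2 : ℝ) ^ n * ∑ σ : Fin n → Bool,
    ∏ p : Pairs n, likPair n a b μ ν (σ p.1.1 == σ p.1.2) (E p)) ^ 2 =
     (1 / 4 : ℝ) ^ n * ∑ σ : Fin n → Bool, ∑ ρ : Fin n → Bool, erMass n a b μ ν E *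
        ((∏ p : Pairs n, likPair n a b μ ν (σ p.1.1 == σ p.1.2) (E p)) *
         (∏ p : Pairs n, likPair n a b μ ν (ρ p.1.1 == ρ p.1.2) (E p))) := by
    intro E
    simp only [← Finset.mul_sum]
    rw [← Finset.sum_mul, h4]
    ring
  simp only [this]
  rw [← Finset.mul_sum, Finset.sum_comm]
  congr 1
  refine Finset.sum_congr rfl (fun σ _ => ?_)
  rw [Finset.sum_comm]

lemma sum_pairs_eq (n : ℕ) (f : Fin n → Fin n → ℝ) :
    ∑ p : Pairs n, f p.1.1 p.1.2 = ∑ u, ∑ v, if u < v then f u v else 0 := by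
  rw [← Fintype.sum_prod_type' (f := fun u v => if u < v then f u v else 0),
    ← Finset.sum_filter]
  exact (Finset.sum_subtype (p := fun p : Fin n × Fin n => p.1 < p.2)
    (univ.filter fun p : Fin n × Fin n => p.1 < p.2) (by simp)
    (fun p => f p.1 p.2)).symm

lemma sum_pairs_sym (n : ℕ) (x : Fin n → ℝ) :
    ∑ p : Pairs n, x p.1.1 * x p.1.2 = ((∑ u, x u) ^ 2 - ∑ u, x u * x u) / 2 := by
  rw [sum_pairs_eq n (fun u v => x u * x v)]
  have h1 : (∑ u, x u) ^ 2 = ∑ u, ∑ v, x u * x v := by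
    rw [sq, Finset.sum_mul_sum]
  have h2 : ∑ u, ∑ v, x u * x v = ∑ u, ∑ v, (if u < v then x u * x v else 0) +
      ∑ u, ∑ v, (if v < u then x v * x u else 0) + ∑ u, x u * x u := by
    have : ∑ u, x u * x u = ∑ u, ∑ v, if u = v then x u * x v else 0 := by simp
    rw [this, ← Finset.sum_add_distrib, ← Finset.sum_add_distrib]
    refine Finset.sum_congr rfl (fun u _ => ?_)
    rw [← Finset.sum_add_distrib, ← Finset.sum_add_distrib]
    refine Finset.sum_congr rfl (fun v _ => ?_)
    rcases lt_trichotomy u v with h | h | h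
    · simp [h, h.not_gt, h.ne]
    · simp [h]
    · simp [h, h.not_gt, h.ne', mul_comm]
  rw [Finset.sum_comm (f := fun u v => if v < u then x v * x u else 0)] at h2
  rw [h1, h2]; ring

/-- half log-odds -/
noncomputable def Bc (g : ℝ) : ℝ := (log (1 + g) - log (1 - g)) / 2

noncomputable def Ac (g : ℝ) : ℝ := (log (1 + g) + log (1 - g)) / 2

lemma pair_factor (g : ℝ) (h0 : 0 ≤ g) (h1 : g < 1) (s t : Bool) (x y : ℝ)
    (hx : x = sg s) (hy : y = sg t) :
    1 + x * y * g = exp (Ac g + Bc g * (x * y)) := by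
  have e1 : exp (Ac g + Bc g) = 1 + g := by
    rw [show Ac g + Bc g = log (1 + g) by unfold Ac Bc; ring, exp_log (by linarith)]
  have e2 : exp (Ac g - Bc g) = 1 - g := by
    rw [show Ac g - Bc g = log (1 - g) by unfold Ac Bc; ring, exp_log (by linarith)]
  subst hx hy
  cases s <;> cases t <;> simp [sg, e1, ← sub_eq_add_neg, e2]

lemma Bc_nonneg (g : ℝ) (h0 : 0 ≤ g) (h1 : g < 1) : 0 ≤ Bc g := by
  have : log (1 - g) ≤ log (1 + g) := log_le_log (by linarith) (by linarith)
  unfold Bc; linarith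

open MeasureTheory ProbabilityTheory in
lemma hs_transform (B S : ℝ) (hB : 0 ≤ B) :
    exp (B * S ^ 2 / 2) = ∫ z, exp (√B * S * z) ∂(gaussianReal 0 1) := by
  have := congrFun (mgf_id_gaussianReal (μ := 0) (v := 1)) (√B * S)
  simp only [mgf, id] at this
  rw [this]
  congr 1
  rw [mul_pow, sq_sqrt hB]; simp

open MeasureTheory ProbabilityTheory in
lemma avg_eq (n : ℕ) (B : ℝ) (hB : 0 ≤ B) :
    (1 / 4 : ℝ) ^ n * ∑ σ : Fin n → Bool, ∑ ρ : Fin n → Bool,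
      exp (B * (∑ u, sg (σ u) * sg (ρ u)) ^ 2 / 2) =
    ∫ z, (cosh (√B * z)) ^ n ∂(gaussianReal 0 1) := by
  simp only [hs_transform _ _ hB]
  have hint : ∀ t : ℝ, Integrable (fun z => exp (t * z)) (gaussianReal 0 1) :=
    fun t => integrable_exp_mul_gaussianReal t
  have h1 : ∀ σ : Fin n → Bool, ∑ ρ : Fin n → Bool,
      ∫ z, exp (√B * (∑ u, sg (σ u) * sg (ρ u)) * z) ∂(gaussianReal 0 1) =
      2 ^ n * ∫ z, (cosh (√B * z)) ^ n ∂(gaussianReal 0 1) := by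
    intro σ
    rw [← integral_finsetSum _ (fun ρ _ => hint _), ← integral_const_mul]
    congr 1
    funext z
    rw [← mul_pow]
    have : ∀ ρ : Fin n → Bool, exp (√B * (∑ u, sg (σ u) * sg (ρ u)) * z) =
        ∏ u, exp (√B * (sg (σ u) * sg (ρ u)) * z) := by
      intro ρ
      rw [← exp_sum, Finset.mul_sum, Finset.sum_mul]
    simp only [this]
    rw [← Fintype.prod_sum (fun (u : Fin n) (o : Bool) => exp (√B * (sg (σ u) * sg o) * z))]
    rw [Finset.prod_congr rfl (g := fun _ => 2 * cosh (√B * z))]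
    · simp
    · intro u _
      rw [cosh_eq, Fintype.sum_bool]
      cases σ u <;> simp [sg] <;> ring
  simp only [h1]
  simp only [sum_const, card_univ, Fintype.card_fun, Fintype.card_bool, Fintype.card_fin,
    nsmul_eq_mul]
  rw [← mul_assoc, ← mul_assoc]
  push_cast
  rw [← mul_pow, ← mul_pow]
  norm_num

lemma card_pairs (n : ℕ) : (Fintype.card (Pairs n) : ℝ) = (n : ℝ) * (n - 1) / 2 := by
  have := sum_pairs_sym n (fun _ => 1)
  simp at this
  rw [this]; ring

open MeasureTheory ProbabilityTheory in
lemma second_moment_formula (n : ℕ) (g : ℝ) (h0 : 0 ≤ g) (h1 : g < 1) :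
    (1 / 4 : ℝ) ^ n * ∑ σ : Fin n → Bool, ∑ ρ : Fin n → Bool,
        ∏ p : Pairs n, (1 + (sg (σ p.1.1) * sg (ρ p.1.1)) * (sg (σ p.1.2) * sg (ρ p.1.2)) * g) =
    exp (Ac g * ((n : ℝ) * (n - 1) / 2) - n * Bc g / 2) *
      ∫ z, (cosh (√(Bc g) * z)) ^ n ∂(gaussianReal 0 1) := by
  rw [← avg_eq n _ (Bc_nonneg g h0 h1), mul_left_comm (exp _)]
  congr 1
  rw [Finset.mul_sum]
  refine Finset.sum_congr rfl (fun σ _ => ?_)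
  rw [Finset.mul_sum]
  refine Finset.sum_congr rfl (fun ρ _ => ?_)
  rw [Finset.prod_congr rfl (fun p _ => pair_factor g h0 h1 (σ p.1.1 == ρ p.1.1)
    (σ p.1.2 == ρ p.1.2) _ _ (sg_beq _ _).symm (sg_beq _ _).symm)]
  rw [← exp_sum, ← exp_add, Finset.sum_add_distrib, ← Finset.mul_sum,
    sum_pairs_sym n (fun u => sg (σ u) * sg (ρ u))]
  have : ∀ u, sg (σ u) * sg (ρ u) * (sg (σ u) * sg (ρ u)) = 1 := by
    intro u; rw [← sg_beq, sg_sq]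
  simp only [this, sum_const, card_univ, nsmul_eq_mul, card_pairs, Fintype.card_fin]
  congr 1; ring

lemma one_add_le_cosh (x : ℝ) : 1 + x ^ 2 / 2 ≤ cosh x := by
  have h : cosh x = 1 + 2 * sinh (x / 2) ^ 2 := by
    have h1 := cosh_two_mul (x / 2)
    have h2 := cosh_sq (x / 2)
    rw [show 2 * (x / 2) = x by ring] at h1
    rw [h1, h2]; ring
  have h3 : |x / 2| ≤ |sinh (x / 2)| := by
    rw [abs_sinh]
    exact self_le_sinh_iff.2 (abs_nonneg _)
  have := sq_le_sq.2 h3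
  rw [h]; nlinarith

lemma tendsto_mul_log (c x : ℕ → ℝ) (t : ℝ) (hc : ∀ n, 0 ≤ c n) (hx : Tendsto x atTop (nhds 0))
    (h : Tendsto (fun n => c n * x n) atTop (nhds t)) :
    Tendsto (fun n => c n * log (1 + x n)) atTop (nhds t) := by
  have hx1 : Tendsto (fun n => 1 + x n) atTop (nhds 1) := by simpa using hx.const_add 1
  have hpos : ∀ᶠ n in atTop, 0 < 1 + x n := hx1.eventually (lt_mem_nhds one_pos)
  have hl : Tendsto (fun n => c n * x n / (1 + x n)) atTop (nhds t) := by
    have := h.div hx1 one_ne_zero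
    rw [div_one] at this
    exact this
  refine tendsto_of_tendsto_of_tendsto_of_le_of_le' hl h ?_ ?_
  · filter_upwards [hpos] with n hn
    have := one_sub_inv_le_log_of_pos hn
    rw [mul_div_assoc]
    refine mul_le_mul_of_nonneg_left ?_ (hc n)
    refine le_trans (le_of_eq ?_) this
    field_simp; ring
  · filter_upwards [hpos] with n hn
    have := log_le_sub_one_of_pos hn
    exact mul_le_mul_of_nonneg_left (by linarith) (hc n)

open MeasureTheory ProbabilityTheory in
lemma gauss_pdf_mul (s : ℝ) (z : ℝ) :
    gaussianPDFReal 0 1 z * exp (s * z ^ 2 / 2) = (√(2 * π))⁻¹ * exp (-((1 - s) / 2) * z ^ 2) := by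
  simp only [gaussianPDFReal, NNReal.coe_one, mul_one, sub_zero]
  rw [mul_assoc, ← exp_add]
  congr 2; ring

open MeasureTheory ProbabilityTheory in
lemma gauss_integrable (s : ℝ) (hs : s < 1) :
    Integrable (fun z => exp (s * z ^ 2 / 2)) (gaussianReal 0 1) := by
  rw [gaussianReal_of_var_ne_zero 0 one_ne_zero]
  rw [integrable_withDensity_iff_integrable_smul' (measurable_gaussianPDF 0 1)
    (ae_of_all _ fun _ => gaussianPDF_lt_top)]
  simp only [toReal_gaussianPDF, smul_eq_mul, gauss_pdf_mul]
  exact (integrable_exp_neg_mul_sq (by linarith)).const_mul _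

open MeasureTheory ProbabilityTheory in
lemma gauss_integral (s : ℝ) (hs : s < 1) :
    ∫ z, exp (s * z ^ 2 / 2) ∂(gaussianReal 0 1) = 1 / √(1 - s) := by
  rw [integral_gaussianReal_eq_integral_smul one_ne_zero]
  simp only [smul_eq_mul, gauss_pdf_mul]
  rw [integral_const_mul, integral_gaussian, ← sqrt_inv, ← sqrt_mul (by positivity),
    one_div, ← sqrt_inv]
  congr 1
  have := pi_pos.ne'
  have : 1 - s ≠ 0 := by linarith
  field_simp

open MeasureTheory ProbabilityTheory in
lemma cosh_limit (B : ℕ → ℝ) (t : ℝ) (ht : t < 1) (hB : ∀ᶠ n in atTop, 0 ≤ B n)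
    (h : Tendsto (fun n : ℕ => (n : ℝ) * B n) atTop (nhds t)) :
    Tendsto (fun n : ℕ => ∫ z, (cosh (√(B n) * z)) ^ n ∂(gaussianReal 0 1)) atTop
      (nhds (1 / √(1 - t))) := by
  obtain ⟨s, hts, hs⟩ := exists_between ht
  have hbd : ∀ᶠ n : ℕ in atTop, ∀ z, (cosh (√(B n) * z)) ^ n ≤ exp ((n : ℝ) * B n * z ^ 2 / 2) := by
    filter_upwards [hB] with n hn z
    refine (pow_le_pow_left₀ (cosh_pos _).le (cosh_le_exp_half_sq _) n).trans (le_of_eq ?_)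
    rw [← exp_nat_mul, mul_pow, sq_sqrt hn]
    congr 1; ring
  rw [← gauss_integral t ht]
  refine tendsto_integral_filter_of_dominated_convergence (fun z => exp (s * z ^ 2 / 2)) ?_ ?_
    (gauss_integrable s hs) ?_
  · exact Eventually.of_forall fun n => by
      have : Continuous fun z : ℝ => (cosh (√(B n) * z)) ^ n := by fun_prop
      exact this.aestronglyMeasurable
  · filter_upwards [hbd, h.eventually (gt_mem_nhds hts)] with n h1 h2
    refine ae_of_all _ fun z => ?_
    rw [norm_of_nonneg (pow_nonneg (cosh_pos _).le _)]
    refine (h1 z).trans (exp_le_exp.2 ?_)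
    have := mul_le_mul_of_nonneg_right h2.le (sq_nonneg z)
    linarith
  · refine ae_of_all _ fun z => ?_
    have hup : Tendsto (fun n : ℕ => exp ((n : ℝ) * B n * z ^ 2 / 2)) atTop
        (nhds (exp (t * z ^ 2 / 2))) :=
      (continuous_exp.tendsto _).comp ((h.mul_const _).div_const _)
    have hlow : Tendsto (fun n : ℕ => (1 + B n * z ^ 2 / 2) ^ n) atTop
        (nhds (exp (t * z ^ 2 / 2))) := by
      refine Real.tendsto_one_add_pow_exp_of_tendsto ?_
      refine ((h.mul_const (z ^ 2)).div_const 2).congr fun n => ?_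
      ring
    refine tendsto_of_tendsto_of_tendsto_of_le_of_le' hlow hup ?_ ?_
    · filter_upwards [hB] with n hn
      refine pow_le_pow_left₀ (by positivity) ?_ n
      have := one_add_le_cosh (√(B n) * z)
      rwa [mul_pow, sq_sqrt hn] at this
    · filter_upwards [hbd] with n hn using hn z

lemma main_limit (g : ℕ → ℝ) (t : ℝ) (ht : t < 1) (hg : ∀ᶠ n in atTop, 0 ≤ g n)
    (h : Tendsto (fun n : ℕ => (n : ℝ) * g n) atTop (nhds t)) :
    Tendsto (fun n : ℕ => exp (Ac (g n) * ((n : ℝ) * (n - 1) / 2) - n * Bc (g n) / 2) *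
      ∫ z, (cosh (√(Bc (g n)) * z)) ^ n ∂(ProbabilityTheory.gaussianReal 0 1)) atTop
      (nhds (exp (-t / 2 - t ^ 2 / 4) / √(1 - t))) := by
  have hinv : Tendsto (fun n : ℕ => ((n : ℝ))⁻¹) atTop (nhds 0) :=
    tendsto_inv_atTop_nhds_zero_nat
  have g0 : Tendsto g atTop (nhds 0) := by
    have := h.mul hinv
    rw [mul_zero] at this
    refine this.congr' ?_
    filter_upwards [eventually_ne_atTop 0] with n hn
    have : (n : ℝ) ≠ 0 := by exact_mod_cast hn
    field_simp
  have g1 : ∀ᶠ n in atTop, g n < 1 := g0.eventually (gt_mem_nhds one_pos)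
  have hBl : Tendsto (fun n : ℕ => (n : ℝ) * Bc (g n)) atTop (nhds t) := by
    have l1 := tendsto_mul_log (fun n => n) g t (fun n => Nat.cast_nonneg n) g0 h
    have l2 := tendsto_mul_log (fun n => n) (fun n => - g n) (-t) (fun n => Nat.cast_nonneg n)
      (by simpa using g0.neg) (by simpa using h.neg)
    have l3 := (l1.sub l2).div_const 2
    rw [show (t - -t) / 2 = t by ring] at l3
    refine l3.congr fun n => ?_
    unfold Bc; rw [← sub_eq_add_neg]; ring
  have hAl : Tendsto (fun n : ℕ => Ac (g n) * ((n : ℝ) * (n - 1) / 2)) atTop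
      (nhds (- t ^ 2 / 4)) := by
    have l1 := tendsto_mul_log (fun n => (n : ℝ) * (n - 1) / 4) (fun n => - (g n) ^ 2)
      (- t ^ 2 / 4) (fun n => by
        rcases Nat.eq_zero_or_pos n with h | h
        · simp [h]
        · have : (1 : ℝ) ≤ n := by exact_mod_cast h
          have : (0 : ℝ) ≤ n - 1 := by linarith
          positivity)
      (by simpa using (g0.pow 2).neg)
      (by
        have := (((h.pow 2).sub (h.mul g0)).neg).div_const 4
        rw [show -(t ^ 2 - t * 0) / 4 = - t ^ 2 / 4 by ring] at this
        refine this.congr fun n => ?_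
        ring)
    refine l1.congr' ?_
    filter_upwards [hg, g1] with n h0 h1
    unfold Ac
    rw [← log_mul (by linarith) (by linarith),
      show (1 + g n) * (1 - g n) = 1 + - (g n) ^ 2 by ring]
    ring
  have hfin := ((continuous_exp.tendsto _).comp (hAl.sub (hBl.div_const 2))).mul
    (cosh_limit (fun n => Bc (g n)) t ht (by
      filter_upwards [hg, g1] with n h0 h1 using Bc_nonneg _ h0 h1) hBl)
  rw [mul_one_div, show - t ^ 2 / 4 - t / 2 = -t / 2 - t ^ 2 / 4 by ring] at hfin
  exact hfin

lemma tau_nonneg [Fintype L] (a b : ℝ) (ha : 0 < a) (hb : 0 < b)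
    (μ ν : L → ℝ) (hμ : IsProbVec μ) (hν : IsProbVec ν) : 0 ≤ tau a b μ ν := by
  refine Finset.sum_nonneg fun ℓ _ => ?_
  have := hμ.1 ℓ
  have := hν.1 ℓ
  positivity

/-- **Proposition (Limit of the second moment of the likelihood ratio).**
If `τ < 1`, then `E_{ℙ'_n}[Y_n²] → exp(−τ/2 − τ²/4)/√(1 − τ)` as `n → ∞`, where
`Y_n = ℙ_n/ℙ'_n` is the likelihood ratio of the labeled SBM with respect to the
labeled Erdős–Rényi model. -/
theorem second_moment_limit
    {L : Type*} [Fintype L] (a b : ℝ) (ha : 0 < a) (hb : 0 < b)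
    (μ ν : L → ℝ) (hμ : IsProbVec μ) (hν : IsProbVec ν)
    (htau : tau a b μ ν < 1) :
    Filter.Tendsto (fun n : ℕ => erExp n a b μ ν (fun E => (Ylik n a b μ ν E) ^ 2))
      Filter.atTop
      (nhds (Real.exp (-(tau a b μ ν) / 2 - (tau a b μ ν) ^ 2 / 4) /
        Real.sqrt (1 - tau a b μ ν))) := by
  have hinv : Tendsto (fun n : ℕ => ((n : ℝ))⁻¹) atTop (nhds 0) :=
    tendsto_inv_atTop_nhds_zero_nat
  have hp : Tendsto (fun n : ℕ => 1 - (a + b) / (2 * (n : ℝ))) atTop (nhds 1) := by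
    have := (hinv.const_mul ((a + b) / 2)).const_sub 1
    rw [mul_zero, sub_zero] at this
    refine this.congr fun n => ?_
    rw [div_mul_eq_div_div, div_eq_mul_inv _ (n : ℝ)]
  have hpos : ∀ᶠ n : ℕ in atTop, 0 < 1 - (a + b) / (2 * (n : ℝ)) :=
    hp.eventually (lt_mem_nhds one_pos)
  have hg : ∀ᶠ n : ℕ in atTop, 0 ≤ gam n a b μ ν := by
    filter_upwards [hpos] with n hn
    have := tau_nonneg a b ha hb μ ν hμ hν
    unfold gam; positivity
  have hl : Tendsto (fun n : ℕ => (n : ℝ) * gam n a b μ ν) atTop (nhds (tau a b μ ν)) := by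
    have h2 := ((hinv.const_mul (((a - b) / 2) ^ 2)).div hp one_ne_zero).const_add (tau a b μ ν)
    rw [mul_zero, zero_div, add_zero] at h2
    refine h2.congr' ?_
    filter_upwards [eventually_ne_atTop 0, hpos] with n hn hn2
    have : (n : ℝ) ≠ 0 := by exact_mod_cast hn
    have := hn2.ne'
    unfold gam
    simp only [Pi.div_apply]
    generalize 1 - (a + b) / (2 * (n : ℝ)) = q at *
    field_simp
  have g1 : ∀ᶠ n : ℕ in atTop, gam n a b μ ν < 1 := by
    filter_upwards [hl.eventually (gt_mem_nhds htau), hg, eventually_ge_atTop 1] with n h1 h2 h3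
    have : (1 : ℝ) ≤ n := by exact_mod_cast h3
    nlinarith
  refine (main_limit (fun n => gam n a b μ ν) _ htau hg hl).congr' ?_
  filter_upwards [hg, g1, hpos, eventually_ne_atTop 0] with n h0 h1 hn hn0
  rw [second_moment_eq n (by exact_mod_cast hn0) a b ha hb hn.ne' μ ν hμ hν,
    second_moment_formula n _ h0 h1]

end LSBM
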